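/- arXiv:2512.23403 — 2 statements merged into one kernel-verified Lean document; each statement's English description precedes it below -/
import Mathlib

section
/- Let A be a one-register alternating finite-memory automaton over an infinite alphabet Σ with distinguished letters Δ and accepting states F. Let σ = τυφ with |υ| > 0, and let C_0, C_{|τ|}, C_{|τυ|}, C_{|τυφ|} be finite sets of configurations with C_0 →τ C_{|τ|} →υ C_{|τυ|} →φ C_{|τυφ|}. Let α be a Δ-permutation of Σ and Σ′ ⊆ Σ be such that C_{|τυ|}, α(Σ′) ⪯_α C_{|τ|}, Σ′; α(Σ′) ⊆ Σ′; and [υφ] ⊆ Σ′. Then for every k ≥ 1 there exist finite sets of configurations D_1, …, D_k, E_k such that C_{|τυ|} →α(υ) D_1 →α²(υ) D_2 → ⋯ →α^k(υ) D_k →α^k(φ) E_k, and moreover if C_{|τυφ|} ⊆ F × Σ then also E_k ⊆ F × Σ. In particular, if σ = τυφ ∈ L(A) via an accepting run whose configuration sets after reading the prefixes of lengths 0, |τ|, |τυ|, |τυφ| satisfy the above hypotheses, then τ υ α(υ) ⋯ α^k(υ) α^k(φ) ∈ L(A) for every k ≥ 1. -/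
/-- A one-register alternating finite-memory automaton over the alphabet `Sigma`,
with states `S`. -/
structure AFMA (Sigma : Type) (S : Type) where
  s0 : S
  F : Set S
  Δ : Finset Sigma
  θ0 : Sigma
  θ0_notin : θ0 ∉ Δ
  μΔ : S → Sigma → Set (Set S)
  μeq : S → Set (Set S)
  μne : S → Set (Set S × Set S)

namespace AFMA

variable {Sigma S : Type}

open Classical

/-- The induced transition function `μ^c` on a configuration `c` and a letter `σ`:
a set of sets of configurations. -/
noncomputable def muC (A : AFMA Sigma S) (c : S × Sigma) (σ : Sigma) : Set (Set (S × Sigma)) :=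
  if σ ∈ A.Δ then {D | ∃ Q ∈ A.μΔ c.1 σ, D = Q ×ˢ ({c.2} : Set Sigma)}
  else if σ = c.2 then {D | ∃ Q ∈ A.μeq c.1, D = Q ×ˢ ({c.2} : Set Sigma)}
  else {D | ∃ p ∈ A.μne c.1, D = p.1 ×ˢ ({c.2} : Set Sigma) ∪ p.2 ×ˢ ({σ} : Set Sigma)}

/-- `SetStep A C σ C'` : `C' ∈ μ^c(C, σ)`, i.e. `C'` is a union, over all `c ∈ C`,
of chosen elements of `μ^c(c, σ)`. -/
def SetStep (A : AFMA Sigma S) (C : Set (S × Sigma)) (σ : Sigma)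
    (C' : Set (S × Sigma)) : Prop :=
  ∃ g : S × Sigma → Set (S × Sigma),
    (∀ c ∈ C, g c ∈ A.muC c σ) ∧ C' = ⋃ c ∈ C, g c

/-- `Steps A C w C'` : reading the word `w` from the configuration set `C`
the automaton can reach the configuration set `C'`. -/
inductive Steps (A : AFMA Sigma S) :
    Set (S × Sigma) → List Sigma → Set (S × Sigma) → Prop
  | nil (C) : Steps A C [] C
  | cons {C C' C'' σ w} : A.SetStep C σ C' → Steps A C' w C'' → Steps A C (σ :: w) C''

/-- A set of configurations is accepting if all its states are accepting. -/
def Accepting (A : AFMA Sigma S) (C : Set (S × Sigma)) : Prop :=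
  ∀ c ∈ C, c.1 ∈ A.F

/-- The language accepted by `A`. -/
def Lang (A : AFMA Sigma S) : Set (List Sigma) :=
  {w | ∃ C, A.Steps {(A.s0, A.θ0)} w C ∧ A.Accepting C}

/-- The action of a permutation of the alphabet on a set of configurations. -/
def mapConfigs (α : Equiv.Perm Sigma) (C : Set (S × Sigma)) : Set (S × Sigma) :=
  (fun c => (c.1, α c.2)) '' C

end AFMA

/-- A `Δ`-permutation of the alphabet: a bijection fixing every distinguished letter. -/
def IsDeltaPerm {Sigma : Type} (Δ : Finset Sigma) (α : Equiv.Perm Sigma) : Prop :=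
  ∀ δ ∈ Δ, α δ = δ

namespace AFMA

variable {Sigma S : Type}

/-- `Σ(C)` : the set of (non-distinguished) letters occurring in configurations of `C`. -/
def lettersOf (Δ : Finset Sigma) (C : Set (S × Sigma)) : Set Sigma :=
  {σ | σ ∉ Δ ∧ ∃ s, (s, σ) ∈ C}

/-- `S^σ(C)` : the states paired with the letter `σ` in `C`. -/
def statesAt (C : Set (S × Sigma)) (σ : Sigma) : Set S :=
  {s | (s, σ) ∈ C}

/-- `S^{Γ}(C)` : the states paired with some letter of `Γ` in `C`. -/
def statesOn (C : Set (S × Sigma)) (Γ : Set Sigma) : Set S :=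
  ⋃ σ ∈ Γ, statesAt C σ

/-- `Σ^Q(C)` : the letters `σ` with `S^σ(C) = Q`. -/
def lettersWith (C : Set (S × Sigma)) (Q : Set S) : Set Sigma :=
  {σ | statesAt C σ = Q}

/-- The relation `C1,Γ1 ⪯_α C2,Γ2`. -/
def Preceq (Δ : Finset Sigma) (α : Equiv.Perm Sigma)
    (C1 : Set (S × Sigma)) (Γ1 : Set Sigma)
    (C2 : Set (S × Sigma)) (Γ2 : Set Sigma) : Prop :=
  Γ1 ⊆ ⇑α '' Γ2 ∧
  (⇑α '' Γ2) ∩ lettersOf Δ C1 ⊆ Γ1 ∧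
  (∀ σ ∈ Γ1, statesAt C1 σ ⊆ statesAt C2 (α⁻¹ σ)) ∧
  statesOn C1 Γ1ᶜ ⊆ statesOn C2 Γ2ᶜ

end AFMA

/-- The `k`-fold pumping `τ υ α(υ) α²(υ) ⋯ α^k(υ) α^k(φ)` of the decomposition
`τ ++ υ ++ φ` by the permutation `α`. -/
def pumpedWord {Sigma : Type} (α : Equiv.Perm Sigma) (τ υ φ : List Sigma) (k : ℕ) :
    List Sigma :=
  τ ++ υ ++ ((List.range k).flatMap fun i => υ.map ⇑(α ^ (i + 1))) ++ φ.map ⇑(α ^ k)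

namespace AFMA

/-- Pointwise form of the simulation relation: the configuration `d` is covered by `C`. -/
def Cov {Sigma S : Type} (β : Equiv.Perm Sigma) (Γ : Set Sigma)
    (C : Set (S × Sigma)) (d : S × Sigma) : Prop :=
  (β.symm d.2 ∈ Γ ∧ (d.1, β.symm d.2) ∈ C) ∨
    (β.symm d.2 ∉ Γ ∧ ∃ θ, θ ∉ Γ ∧ (d.1, θ) ∈ C)

theorem mem_delta_iff {Sigma : Type} {Δ : Finset Sigma} {β : Equiv.Perm Sigma}
    (hβ : IsDeltaPerm Δ β) (σ : Sigma) : β σ ∈ Δ ↔ σ ∈ Δ := by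
  constructor
  · intro h
    have h1 : β (β σ) = β σ := hβ _ h
    have h2 := β.injective h1
    rwa [h2] at h
  · intro h
    rwa [hβ σ h]

theorem cov_config {Sigma S : Type} (A : AFMA Sigma S) {β : Equiv.Perm Sigma}
    (hβ : IsDeltaPerm A.Δ β) {Γ : Set Sigma} {C C' : Set (S × Sigma)} {σ : Sigma}
    (hσ : σ ∈ Γ) (h : A.SetStep C σ C') (d : S × Sigma) (hd : Cov β Γ C d) :
    ∃ X ∈ A.muC d (β σ), ∀ x ∈ X, Cov β Γ C' x := by
  obtain ⟨g, hg, rfl⟩ := h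
  obtain ⟨s, θ⟩ := d
  -- the simulating configuration
  obtain ⟨η, hη, hiff, hcov⟩ : ∃ η, (s, η) ∈ C ∧ (β σ = θ ↔ σ = η) ∧
      ∀ (B : Set (S × Sigma)) q, (q, η) ∈ B → Cov β Γ B (q, θ) := by
    rcases hd with ⟨h1, h2⟩ | ⟨h1, η, h2, h3⟩
    · refine ⟨β.symm θ, h2, ?_, ?_⟩
      · exact (Equiv.eq_symm_apply β).symm
      · intro B q hq
        exact Or.inl ⟨h1, hq⟩
    · refine ⟨η, h3, ?_, ?_⟩
      · constructor
        · rintro rfl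
          simp [hσ] at h1
        · rintro rfl
          exact absurd hσ h2
      · intro B q hq
        exact Or.inr ⟨h1, η, h2, hq⟩
  have hmem := hg _ hη
  have hsub : ∀ x ∈ g (s, η), x ∈ ⋃ c ∈ C, g c := fun x hx =>
    Set.mem_biUnion hη hx
  unfold muC at hmem ⊢
  by_cases hΔ : σ ∈ A.Δ
  · rw [if_pos hΔ] at hmem
    rw [if_pos ((mem_delta_iff hβ σ).2 hΔ)]
    obtain ⟨Q, hQ, he⟩ := hmem
    refine ⟨_, ⟨Q, by rwa [hβ σ hΔ], rfl⟩, ?_⟩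
    rintro ⟨q, t⟩ ⟨hq, ht⟩
    obtain rfl : t = θ := ht
    exact hcov _ q (hsub _ (by rw [he]; exact ⟨hq, rfl⟩))
  · rw [if_neg hΔ] at hmem
    rw [if_neg (fun h => hΔ ((mem_delta_iff hβ σ).1 h))]
    by_cases hE : σ = η
    · rw [if_pos hE] at hmem
      rw [if_pos (hiff.2 hE)]
      obtain ⟨Q, hQ, he⟩ := hmem
      refine ⟨_, ⟨Q, hQ, rfl⟩, ?_⟩
      rintro ⟨q, t⟩ ⟨hq, ht⟩
      obtain rfl : t = θ := ht
      exact hcov _ q (hsub _ (by rw [he]; exact ⟨hq, rfl⟩))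
    · rw [if_neg hE] at hmem
      rw [if_neg (fun h => hE (hiff.1 h))]
      obtain ⟨p, hp, he⟩ := hmem
      refine ⟨_, ⟨p, hp, rfl⟩, ?_⟩
      rintro ⟨q, t⟩ (⟨hq, ht⟩ | ⟨hq, ht⟩)
      · obtain rfl : t = θ := ht
        exact hcov _ q (hsub _ (by rw [he]; exact Or.inl ⟨hq, rfl⟩))
      · obtain rfl : t = β σ := ht
        refine Or.inl ⟨by simpa using hσ, ?_⟩
        simp only [Equiv.symm_apply_apply]
        exact hsub _ (by rw [he]; exact Or.inr ⟨hq, rfl⟩)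

theorem cov_step {Sigma S : Type} (A : AFMA Sigma S) {β : Equiv.Perm Sigma}
    (hβ : IsDeltaPerm A.Δ β) {Γ : Set Sigma} {C C' : Set (S × Sigma)} {σ : Sigma}
    (hσ : σ ∈ Γ) (h : A.SetStep C σ C') (D : Set (S × Sigma)) (hD : ∀ d ∈ D, Cov β Γ C d) :
    ∃ D', A.SetStep D (β σ) D' ∧ ∀ d ∈ D', Cov β Γ C' d := by
  have key : ∀ d, ∃ X, d ∈ D → X ∈ A.muC d (β σ) ∧ ∀ x ∈ X, Cov β Γ C' x := by
    intro d
    by_cases hd : d ∈ D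
    · obtain ⟨X, h1, h2⟩ := cov_config A hβ hσ h d (hD d hd)
      exact ⟨X, fun _ => ⟨h1, h2⟩⟩
    · exact ⟨∅, fun h => absurd h hd⟩
  choose f hf using key
  refine ⟨⋃ c ∈ D, f c, ⟨f, fun c hc => (hf c hc).1, rfl⟩, ?_⟩
  intro x hx
  simp only [Set.mem_iUnion] at hx
  obtain ⟨c, hc, hx⟩ := hx
  exact (hf c hc).2 x hx

theorem cov_steps {Sigma S : Type} (A : AFMA Sigma S) {β : Equiv.Perm Sigma}
    (hβ : IsDeltaPerm A.Δ β) {Γ : Set Sigma} {C C' : Set (S × Sigma)} {w : List Sigma}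
    (h : A.Steps C w C') (hw : ∀ x ∈ w, x ∈ Γ)
    (D : Set (S × Sigma)) (hD : ∀ d ∈ D, Cov β Γ C d) :
    ∃ D', A.Steps D (w.map β) D' ∧ ∀ d ∈ D', Cov β Γ C' d := by
  induction h generalizing D with
  | nil C => exact ⟨D, Steps.nil D, hD⟩
  | cons h1 h2 ih =>
    obtain ⟨D1, h3, h4⟩ := cov_step A hβ (hw _ (by simp)) h1 D hD
    obtain ⟨D2, h5, h6⟩ := ih (fun x hx => hw x (by simp [hx])) D1 h4
    exact ⟨D2, Steps.cons h3 h5, h6⟩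

theorem steps_append {Sigma S : Type} (A : AFMA Sigma S) {C C' C'' : Set (S × Sigma)}
    {v w : List Sigma} (h : A.Steps C v C') (h' : A.Steps C' w C'') :
    A.Steps C (v ++ w) C'' := by
  induction h with
  | nil C => exact h'
  | cons h1 h2 ih => exact Steps.cons h1 (ih h')

theorem cov_accepting {Sigma S : Type} (A : AFMA Sigma S) {β : Equiv.Perm Sigma}
    {Γ : Set Sigma} {C D : Set (S × Sigma)} (hD : ∀ d ∈ D, Cov β Γ C d)
    (hC : A.Accepting C) : A.Accepting D := by
  intro d hd
  rcases hD d hd with ⟨_, h⟩ | ⟨_, η, _, h⟩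
  · exact hC (d.1, β.symm d.2) h
  · exact hC (d.1, η) h

theorem pow_mem {Sigma : Type} {α : Equiv.Perm Sigma} {Γ : Set Sigma}
    (hsub : ⇑α '' Γ ⊆ Γ) (k : ℕ) (x : Sigma) (hx : x ∈ Γ) : (α ^ k) x ∈ Γ := by
  induction k with
  | zero => simpa using hx
  | succ k ih =>
    rw [pow_succ', Equiv.Perm.mul_apply]
    exact hsub ⟨_, ih, rfl⟩

theorem map_pow_succ {Sigma : Type} (α : Equiv.Perm Sigma) (k : ℕ) (w : List Sigma) :
    (w.map ⇑(α ^ k)).map ⇑α = w.map ⇑(α ^ (k + 1)) := by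
  rw [List.map_map, pow_succ', Equiv.Perm.coe_mul]

theorem chain_exists {Sigma S : Type}
    (A : AFMA Sigma S) (υ φ : List Sigma)
    (C1 C2 C3 : Set (S × Sigma))
    (hυs : A.Steps C1 υ C2) (hφ : A.Steps C2 φ C3)
    (α : Equiv.Perm Sigma) (hα : IsDeltaPerm A.Δ α) (Γ : Set Sigma)
    (hpre : ∀ d ∈ C2, Cov α Γ C1 d)
    (hsub : ⇑α '' Γ ⊆ Γ)
    (hυΓ : ∀ x ∈ υ, x ∈ Γ) (hφΓ : ∀ x ∈ φ, x ∈ Γ) (k : ℕ) :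
    ∃ D : ℕ → Set (S × Sigma), D 0 = C2 ∧
        (∀ i < k, A.Steps (D i) (υ.map ⇑(α ^ (i + 1))) (D (i + 1))) ∧
        (∃ B, A.Steps B (υ.map ⇑(α ^ k)) (D k) ∧ ∀ d ∈ D k, Cov α Γ B d) ∧
        ∃ E : Set (S × Sigma), A.Steps (D k) (φ.map ⇑(α ^ k)) E ∧
          (A.Accepting C3 → A.Accepting E) := by
  induction k with
  | zero =>
    exact ⟨fun _ => C2, rfl, by simp, ⟨C1, by simpa using hυs, hpre⟩,
      C3, by simpa using hφ, id⟩
  | succ k ih =>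
    obtain ⟨D, h0, hst, ⟨B, hB, hcov⟩, E, hE, hacc⟩ := ih
    have hmem : ∀ w : List Sigma, (∀ x ∈ w, x ∈ Γ) → ∀ x ∈ w.map ⇑(α ^ k), x ∈ Γ := by
      intro w hw x hx
      obtain ⟨y, hy, rfl⟩ := List.mem_map.1 hx
      exact pow_mem hsub k y (hw y hy)
    obtain ⟨N, hN, hNc⟩ := cov_steps A hα hB (hmem υ hυΓ) (D k) hcov
    obtain ⟨E', hE', hEc⟩ := cov_steps A hα hE (hmem φ hφΓ) N hNc
    rw [map_pow_succ] at hN hE'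
    refine ⟨fun i => if i ≤ k then D i else N, by simpa using h0, ?_,
      ⟨D k, by simpa using hN, by simpa using hNc⟩, E', by simpa using hE',
      fun h => cov_accepting A hEc (hacc h)⟩
    intro i hi
    rcases Nat.lt_succ_iff_lt_or_eq.1 hi with h | rfl
    · have h1 : i ≤ k := h.le
      have h2 : i + 1 ≤ k := h
      simpa only [if_pos h1, if_pos h2] using hst i h
    · simpa using hN

end AFMA

/-- Corollary (iterated sufficient condition): under the hypotheses
`C_{|τυ|}, α(Γ) ⪯_α C_{|τ|}, Γ`, `α(Γ) ⊆ Γ`, `[υφ] ⊆ Γ`, for every `k ≥ 1` there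
is a chain `C_{|τυ|} →α(υ) D 1 →α²(υ) ⋯ →α^k(υ) D k →α^k(φ) E` with `E`
accepting whenever `C_{|τυφ|}` is; in particular, if the run started at the
initial configuration and `C_{|τυφ|}` is accepting, then the pumped word
`τ υ α(υ) ⋯ α^k(υ) α^k(φ)` is accepted. -/
theorem afma_sufficient_iterated {Sigma S : Type} [Infinite Sigma] [Fintype S]
    (A : AFMA Sigma S) (τ υ φ : List Sigma) (hυ : υ ≠ [])
    (C0 C1 C2 C3 : Set (S × Sigma))
    (hf0 : C0.Finite) (hf1 : C1.Finite) (hf2 : C2.Finite) (hf3 : C3.Finite)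
    (hτ : A.Steps C0 τ C1) (hυs : A.Steps C1 υ C2) (hφ : A.Steps C2 φ C3)
    (α : Equiv.Perm Sigma) (hα : IsDeltaPerm A.Δ α) (Γ : Set Sigma)
    (hpre : AFMA.Preceq A.Δ α C2 (⇑α '' Γ) C1 Γ)
    (hsub : ⇑α '' Γ ⊆ Γ)
    (hletters : ∀ x ∈ υ ++ φ, x ∈ Γ) :
    ∀ k : ℕ, 1 ≤ k →
      (∃ D : ℕ → Set (S × Sigma), D 0 = C2 ∧
        (∀ i < k, A.Steps (D i) (υ.map ⇑(α ^ (i + 1))) (D (i + 1))) ∧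
        ∃ E : Set (S × Sigma), A.Steps (D k) (φ.map ⇑(α ^ k)) E ∧
          (A.Accepting C3 → A.Accepting E)) ∧
      (C0 = {(A.s0, A.θ0)} → A.Accepting C3 →
        pumpedWord α τ υ φ k ∈ A.Lang) := by
  intro k _
  have hcov : ∀ d ∈ C2, AFMA.Cov α Γ C1 d := by
    rintro ⟨s, θ⟩ hd
    obtain ⟨-, -, h3, h4⟩ := hpre
    by_cases hθ : α.symm θ ∈ Γ
    · exact Or.inl ⟨hθ, h3 θ ⟨_, hθ, by simp⟩ hd⟩
    · have hs : s ∈ AFMA.statesOn C2 (⇑α '' Γ)ᶜ := by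
        refine Set.mem_biUnion (x := θ) ?_ hd
        rintro ⟨y, hy, rfl⟩
        simp [hy] at hθ
      have hs' := h4 hs
      simp only [AFMA.statesOn, Set.mem_iUnion] at hs'
      obtain ⟨η, hη, hm⟩ := hs'
      exact Or.inr ⟨hθ, η, hη, hm⟩
  obtain ⟨D, h0, hst, -, E, hE, hacc⟩ := AFMA.chain_exists A υ φ C1 C2 C3 hυs hφ α hα Γ hcov hsub
    (fun x hx => hletters x (by simp [hx])) (fun x hx => hletters x (by simp [hx])) k
  refine ⟨⟨D, h0, hst, E, hE, hacc⟩, ?_⟩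
  rintro rfl hC3
  have hmid : ∀ j ≤ k, A.Steps C2 ((List.range j).flatMap fun i => υ.map ⇑(α ^ (i + 1))) (D j) := by
    intro j
    induction j with
    | zero => intro _; rw [h0]; exact AFMA.Steps.nil _
    | succ j ih =>
      intro hj
      rw [List.range_succ, List.flatMap_append]
      refine AFMA.steps_append A (ih (by omega)) ?_
      simpa using hst j (by omega)
  exact ⟨E, AFMA.steps_append A (AFMA.steps_append A (AFMA.steps_append A hτ hυs)
    (hmid k le_rfl)) hE, hacc hC3⟩
end

section
/- Let A be a one-register alternating finite-memory automaton over an infinite alphabet Σ with state set S and distinguished letters Δ. Let σ = σ1σ2⋯σm ∈ L(A), let C_0, C_1, …, C_m be an accepting run of A on σ, and let σ = τυφ with |υ| > 0 be a decomposition such that: for every nonempty subset Q of S, card(Σ^Q(C_{|τυ|}) ∩ [φ]) ≤ card(Σ^Q(C_{|τ|}) ∩ [υφ]); and S^{Σ∖[φ]}(C_{|τυ|}) = S^{Σ∖[υφ]}(C_{|τ|}). Then there exists a Δ-permutation α of Σ such that for every k ≥ 1 the word τ υ α(υ) α²(υ) ⋯ α^k(υ) α^k(φ) belongs to L(A). 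-/
namespace AFMA

variable {Sigma S : Type}

/-- Acceptance of a word from a single configuration. -/
def AccW (A : AFMA Sigma S) : List Sigma → S × Sigma → Prop
  | [], c => c.1 ∈ A.F
  | σ :: w, c => ∃ D ∈ A.muC c σ, ∀ d ∈ D, AccW A w d

theorem exists_steps_of_accW (A : AFMA Sigma S) (w : List Sigma) :
    ∀ C : Set (S × Sigma), (∀ c ∈ C, A.AccW w c) → ∃ C', A.Steps C w C' ∧ A.Accepting C' := by
  induction w with
  | nil => intro C h; exact ⟨C, Steps.nil C, h⟩
  | cons σ w ih =>
    intro C h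
    choose! g hg hg2 using h
    obtain ⟨C', h1, h2⟩ := ih (⋃ c ∈ C, g c) (by
      intro d hd
      simp only [Set.mem_iUnion] at hd
      obtain ⟨c, hc, hd⟩ := hd
      exact hg2 c hc d hd)
    exact ⟨C', Steps.cons ⟨g, hg, rfl⟩ h1, h2⟩

theorem accW_append_of_steps (A : AFMA Sigma S) {C D : Set (S × Sigma)} {v : List Sigma}
    (h : A.Steps C v D) (w : List Sigma) (hD : ∀ d ∈ D, A.AccW w d) :
    ∀ c ∈ C, A.AccW (v ++ w) c := by
  induction h with
  | nil C => exact hD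
  | cons hs _ ih =>
    obtain ⟨g, hg, rfl⟩ := hs
    intro c hc
    refine ⟨g c, hg c hc, fun d hd => ih hD d ?_⟩
    simp only [Set.mem_iUnion]
    exact ⟨c, hc, hd⟩

theorem accW_map (A : AFMA Sigma S) (α : Equiv.Perm Sigma) (hα : IsDeltaPerm A.Δ α)
    (w : List Sigma) : ∀ (s : S) (θ : Sigma), A.AccW w (s, θ) → A.AccW (w.map α) (s, α θ) := by
  have hmem : ∀ x, α x ∈ A.Δ ↔ x ∈ A.Δ := by
    intro x
    constructor
    · intro h
      have := hα _ h
      rw [α.injective this] at h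
      exact h
    · intro h
      rw [hα x h]
      exact h
  induction w with
  | nil => intro s θ h; exact h
  | cons σ w ih =>
    intro s θ ⟨D, hD, hacc⟩
    by_cases h1 : σ ∈ A.Δ
    · simp only [muC, h1, if_true, Set.mem_ofPred_eq] at hD
      obtain ⟨Q, hQ, rfl⟩ := hD
      refine ⟨Q ×ˢ {α θ}, ?_, ?_⟩
      · simp only [muC, hmem, h1, if_true, Set.mem_ofPred_eq]
        refine ⟨Q, ?_, rfl⟩
        rw [hα σ h1]
        exact hQ
      · rintro ⟨q, t⟩ ⟨hq, ht⟩
        simp only [Set.mem_singleton_iff] at ht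
        subst ht
        exact ih q θ (hacc _ ⟨hq, rfl⟩)
    · by_cases h2 : σ = θ
      · simp only [muC, h1, h2, if_true, if_false, Set.mem_ofPred_eq] at hD
        rw [← h2] at hD
        simp only [h1, if_false, Set.mem_ofPred_eq] at hD
        obtain ⟨Q, hQ, rfl⟩ := hD
        refine ⟨Q ×ˢ {α θ}, ?_, ?_⟩
        · simp only [muC, hmem, h1, if_false, Set.mem_ofPred_eq]
          rw [if_pos (by rw [h2])]
          exact ⟨Q, hQ, rfl⟩
        · rintro ⟨q, t⟩ ⟨hq, ht⟩
          simp only [Set.mem_singleton_iff] at ht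
          subst ht
          exact ih q θ (hacc _ ⟨hq, by simp [h2]⟩)
      · simp only [muC, h1, h2, if_false, Set.mem_ofPred_eq] at hD
        obtain ⟨p, hp, rfl⟩ := hD
        refine ⟨p.1 ×ˢ {α θ} ∪ p.2 ×ˢ {α σ}, ?_, ?_⟩
        · simp only [muC, hmem, h1, if_false, Set.mem_ofPred_eq]
          rw [if_neg (by simpa using h2)]
          exact ⟨p, hp, rfl⟩
        · rintro ⟨q, t⟩ (⟨hq, ht⟩ | ⟨hq, ht⟩)
          · simp only [Set.mem_singleton_iff] at ht
            subst ht
            exact ih q θ (hacc _ (Or.inl ⟨hq, rfl⟩))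
          · simp only [Set.mem_singleton_iff] at ht
            subst ht
            exact ih q σ (hacc _ (Or.inr ⟨hq, rfl⟩))

theorem accW_irrel (A : AFMA Sigma S) (w : List Sigma) :
    ∀ (s : S) (θ θ' : Sigma), θ ∉ w → θ' ∉ w → A.AccW w (s, θ) → A.AccW w (s, θ') := by
  induction w with
  | nil => intro s θ θ' _ _ h; exact h
  | cons σ w ih =>
    intro s θ θ' hθ hθ' ⟨D, hD, hacc⟩
    simp only [List.mem_cons, not_or] at hθ hθ'
    by_cases h1 : σ ∈ A.Δ
    · simp only [muC, h1, if_true, Set.mem_ofPred_eq] at hD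
      obtain ⟨Q, hQ, rfl⟩ := hD
      refine ⟨Q ×ˢ {θ'}, ?_, ?_⟩
      · simp only [muC, h1, if_true, Set.mem_ofPred_eq]
        exact ⟨Q, hQ, rfl⟩
      · rintro ⟨q, t⟩ ⟨hq, ht⟩
        simp only [Set.mem_singleton_iff] at ht
        subst ht
        exact ih q θ _ hθ.2 hθ'.2 (hacc _ ⟨hq, rfl⟩)
    · simp only [muC, h1, Ne.symm hθ.1, if_false, Set.mem_ofPred_eq] at hD
      obtain ⟨p, hp, rfl⟩ := hD
      refine ⟨p.1 ×ˢ {θ'} ∪ p.2 ×ˢ {σ}, ?_, ?_⟩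
      · simp only [muC, h1, Ne.symm hθ'.1, if_false, Set.mem_ofPred_eq]
        exact ⟨p, hp, rfl⟩
      · rintro ⟨q, t⟩ (⟨hq, ht⟩ | ht)
        · simp only [Set.mem_singleton_iff] at ht
          subst ht
          exact ih q θ _ hθ.2 hθ'.2 (hacc _ (Or.inl ⟨hq, rfl⟩))
        · exact hacc _ (Or.inr ht)

theorem steps_of_run (A : AFMA Sigma S) (w : List Sigma) : ∀ (Cs : ℕ → Set (S × Sigma)),
    (∀ i (h : i < w.length), A.SetStep (Cs i) (w[i]) (Cs (i + 1))) →
    A.Steps (Cs 0) w (Cs w.length) := by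
  induction w with
  | nil => intro Cs _; exact Steps.nil _
  | cons σ w ih =>
    intro Cs h
    refine Steps.cons (h 0 (by simp)) ?_
    exact ih (fun i => Cs (i + 1)) (fun i hi => h (i + 1) (by simpa using hi))

/-- Letters in reachable configurations. -/
theorem letters_of_steps (A : AFMA Sigma S) {C D : Set (S × Sigma)} {v : List Sigma}
    (h : A.Steps C v D) : ∀ d ∈ D, (∃ c ∈ C, c.2 = d.2) ∨ (d.2 ∈ v ∧ d.2 ∉ A.Δ) := by
  induction h with
  | nil C => intro d hd; exact Or.inl ⟨d, hd, rfl⟩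
  | @cons C C' C'' σ w hs _ ih =>
    obtain ⟨g, hg, rfl⟩ := hs
    intro d hd
    rcases ih d hd with ⟨c', hc', hcd⟩ | ⟨h1, h2⟩
    · simp only [Set.mem_iUnion] at hc'
      obtain ⟨c, hc, hc'⟩ := hc'
      have hgc := hg c hc
      rw [← hcd]
      unfold muC at hgc
      split_ifs at hgc with h1 h2
      · obtain ⟨Q, _, hQ⟩ := hgc
        rw [hQ] at hc'
        exact Or.inl ⟨c, hc, hc'.2.symm⟩
      · obtain ⟨Q, _, hQ⟩ := hgc
        rw [hQ] at hc'
        exact Or.inl ⟨c, hc, hc'.2.symm⟩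
      · obtain ⟨p, _, hp⟩ := hgc
        rw [hp] at hc'
        rcases hc' with hc' | hc'
        · exact Or.inl ⟨c, hc, hc'.2.symm⟩
        · have : c'.2 = σ := hc'.2
          rw [this]
          exact Or.inr ⟨by simp, h1⟩
    · exact Or.inr ⟨List.mem_cons_of_mem _ h1, h2⟩

end AFMA

/-- A shift permutation pushing the part `T` of a finite set `W` outside of `W` forever. -/
theorem exists_shift_perm {X : Type} [Infinite X] (W : Finset X) (T : Set X) (hT : T ⊆ W) :
    ∃ (ρ : Equiv.Perm X) (R : Set X), (∀ x ∈ W, x ∉ T → ρ x = x) ∧ (∀ x ∈ T, ρ x ∈ R) ∧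
      (∀ x ∈ R, ρ x ∈ R) ∧ (∀ x ∈ R, x ∉ W) := by
  classical
  have hinf : Infinite {x : X // x ∉ W} := (Finset.finite_toSet W).infinite_compl.to_subtype
  have hTf : Finite T := (W.finite_toSet.subset hT).to_subtype
  let ν : ℕ ↪ {x : X // x ∉ W} := Infinite.natEmbedding _
  obtain ⟨j, hj⟩ := Countable.exists_injective_nat (ℤ × T)
  let e : ℤ × T → X := fun p => if p.1 = 0 then (p.2 : X) else (ν (j p) : X)
  have he0 : ∀ t : T, e (0, t) = t := fun t => by simp [e]
  have hen : ∀ p : ℤ × T, p.1 ≠ 0 → e p = ν (j p) := fun p hp => by simp [e, hp]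
  have henW : ∀ p : ℤ × T, p.1 ≠ 0 → e p ∉ W := fun p hp => by
    rw [hen p hp]; exact (ν (j p)).2
  have hinj : Function.Injective e := by
    rintro ⟨n, t⟩ ⟨m, u⟩ h
    by_cases hn : n = 0 <;> by_cases hm : m = 0
    · subst hn hm
      rw [he0, he0] at h
      rw [Subtype.ext h]
    · subst hn
      exact absurd (hT t.2) (by have := henW (m, u) hm; rwa [← h, he0] at this)
    · subst hm
      exact absurd (hT u.2) (by have := henW (n, t) hn; rwa [h, he0] at this)
    · rw [hen _ hn, hen _ hm] at h
      exact hj (ν.injective (Subtype.ext h))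
  let sh : Equiv.Perm (ℤ × T) := (Equiv.addRight (1 : ℤ)).prodCongr (Equiv.refl T)
  have hsh : ∀ n t, sh (n, t) = (n + 1, t) := fun n t => rfl
  let ρ := sh.viaEmbedding ⟨e, hinj⟩
  have hρ : ∀ p, ρ (e p) = e (sh p) := fun p => Equiv.Perm.viaEmbedding_apply sh ⟨e, hinj⟩ p
  refine ⟨ρ, {x | ∃ n : ℤ, 0 < n ∧ ∃ t, x = e (n, t)}, ?_, ?_, ?_, ?_⟩
  · intro x hx hxT
    apply Equiv.Perm.viaEmbedding_apply_of_notMem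
    rintro ⟨⟨n, t⟩, h⟩
    change e (n, t) = x at h
    by_cases hn : n = 0
    · subst hn
      rw [he0] at h
      exact hxT (h ▸ t.2)
    · exact henW (n, t) hn (h ▸ hx)
  · intro x hx
    refine ⟨1, one_pos, ⟨x, hx⟩, ?_⟩
    have := hρ (0, ⟨x, hx⟩)
    rw [he0, hsh] at this
    simpa using this
  · rintro x ⟨n, hn, t, rfl⟩
    exact ⟨n + 1, by omega, t, by rw [hρ, hsh]⟩
  · rintro x ⟨n, hn, t, rfl⟩
    exact henW (n, t) (by simpa using hn.ne')

/-- Extension of a partial injection on a finite set. -/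
theorem exists_perm_extend_escape {X : Type} [Infinite X] (W : Finset X) (U : Set X) (hU : U ⊆ W)
    (f : X → X) (hf : Set.MapsTo f U W) (hinj : Set.InjOn f U) :
    ∃ (β : Equiv.Perm X), (∀ x ∈ U, β x = f x) ∧
      ∀ x ∈ W, x ∉ U → ∀ i : ℕ, (β ^ (i + 1)) x ∉ W := by
  classical
  obtain ⟨g, hg⟩ := Set.MapsTo.exists_equiv_extend_of_card_eq (α := {x // x ∈ W}) (t := W)
    (by simp) (s := {x | (x : X) ∈ U}) (f := fun x => f x)
    (fun x hx => hf hx) (fun x hx y hy h => Subtype.ext (hinj hx hy h))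
  let γ : Equiv.Perm X := Equiv.Perm.viaEmbedding g (Function.Embedding.subtype _)
  have hγ : ∀ x (hx : x ∈ W), γ x = g ⟨x, hx⟩ := fun x hx =>
    Equiv.Perm.viaEmbedding_apply g (Function.Embedding.subtype _) ⟨x, hx⟩
  have hγ' : ∀ x, x ∉ W → γ x = x := fun x hx => by
    apply Equiv.Perm.viaEmbedding_apply_of_notMem
    rintro ⟨y, rfl⟩
    exact hx y.2
  have hγU : ∀ x ∈ U, γ x = f x := fun x hx => by
    rw [hγ x (hU hx)]; exact hg ⟨x, hU hx⟩ hx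
  obtain ⟨ρ, R, h1, h2, h3, h4⟩ := exists_shift_perm W {x | x ∈ W ∧ ∀ u ∈ U, γ u ≠ x}
    (fun x hx => hx.1)
  refine ⟨ρ * γ, ?_, ?_⟩
  · intro x hx
    rw [Equiv.Perm.mul_apply, h1, hγU x hx]
    · rw [hγU x hx]; exact hf hx
    · rintro ⟨_, h⟩
      exact h x hx rfl
  · intro x hx hxU i
    apply h4
    induction i with
    | zero =>
      rw [zero_add, pow_one, Equiv.Perm.mul_apply]
      apply h2
      refine ⟨by rw [hγ x hx]; exact (g ⟨x, hx⟩).2, ?_⟩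
      intro u hu h
      exact hxU (γ.injective h ▸ hu)
    | succ i ih =>
      rw [pow_succ', Equiv.Perm.mul_apply, Equiv.Perm.mul_apply, hγ' _ (h4 _ ih)]
      exact h3 _ ih

/-- Per-fibre cardinality comparison yields an injection preserving the fibre label. -/
theorem exists_fiber_injection {X Y : Type} (a b : X → Set Y) (V Z : Set X)
    (hV : V.Finite) (hZ : Z.Finite)
    (h : ∀ Q : Set Y, Q.Nonempty → ({x | a x = Q} ∩ V).ncard ≤ ({x | b x = Q} ∩ Z).ncard) :
    ∃ f : X → X, (∀ x ∈ V, (a x).Nonempty → f x ∈ Z ∧ b (f x) = a x) ∧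
      Set.InjOn f {x | x ∈ V ∧ (a x).Nonempty} := by
  classical
  have key : ∀ Q : Set Y, ∃ f : X → X, Q.Nonempty →
      Set.MapsTo f ({x | a x = Q} ∩ V) ({x | b x = Q} ∩ Z) ∧
      Set.InjOn f ({x | a x = Q} ∩ V) := by
    intro Q
    by_cases hQ : Q.Nonempty
    · have fin1 : ({x | a x = Q} ∩ V).Finite := hV.inter_of_right _
      have fin2 : ({x | b x = Q} ∩ Z).Finite := hZ.inter_of_right _
      have := h Q hQ
      by_cases hX : Nonempty X
      · have hle : ({x | a x = Q} ∩ V).encard ≤ ({x | b x = Q} ∩ Z).encard := by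
          rw [← fin1.cast_ncard_eq, ← fin2.cast_ncard_eq]
          exact_mod_cast this
        obtain ⟨f, hf, hf2⟩ := fin1.exists_injOn_of_encard_le hle
        exact ⟨f, fun _ => ⟨fun x hx => hf hx, hf2⟩⟩
      · exact ⟨id, fun _ => ⟨fun x => absurd ⟨x⟩ hX, fun x => absurd ⟨x⟩ hX⟩⟩
    · exact ⟨id, fun hh => absurd hh hQ⟩
  choose F hF using key
  refine ⟨fun x => F (a x) x, ?_, ?_⟩
  · intro x hx hne
    have := (hF (a x) hne).1 ⟨rfl, hx⟩
    exact ⟨this.2, this.1⟩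
  · rintro x ⟨hx, hxn⟩ y ⟨hy, hyn⟩ hxy
    change F (a x) x = F (a y) y at hxy
    have h1 := ((hF (a x) hxn).1 ⟨rfl, hx⟩).1
    have h2 := ((hF (a y) hyn).1 ⟨rfl, hy⟩).1
    simp only [Set.mem_ofPred_eq] at h1 h2
    have hab : a x = a y := by rw [← h1, ← h2, hxy]
    rw [← hab] at hxy
    exact (hF (a x) hxn).2 ⟨rfl, hx⟩ ⟨hab.symm, hy⟩ hxy

/-- The recursively pumped suffix. -/
def pumpTail {Sigma : Type} (α : Equiv.Perm Sigma) (υ φ : List Sigma) : ℕ → List Sigma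
  | 0 => υ ++ φ
  | k + 1 => υ ++ (pumpTail α υ φ k).map α

theorem pumpTail_eq {Sigma : Type} (α : Equiv.Perm Sigma) (υ φ : List Sigma) (k : ℕ) :
    pumpTail α υ φ k =
      υ ++ ((List.range k).flatMap fun i => υ.map ⇑(α ^ (i + 1))) ++ φ.map ⇑(α ^ k) := by
  induction k with
  | zero => simp [pumpTail]
  | succ k ih =>
    rw [pumpTail, ih, List.range_succ_eq_map]
    simp [List.map_flatMap, List.flatMap_map, pow_succ']

theorem mem_pumpTail {Sigma : Type} (α : Equiv.Perm Sigma) (υ φ : List Sigma) (k : ℕ) :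
    ∀ x ∈ pumpTail α υ φ k, ∃ i : ℕ, ((α⁻¹) ^ i) x ∈ υ ++ φ := by
  induction k with
  | zero => intro x hx; exact ⟨0, hx⟩
  | succ k ih =>
    intro x hx
    rw [pumpTail, List.mem_append] at hx
    rcases hx with hx | hx
    · exact ⟨0, by simp [hx]⟩
    · obtain ⟨y, hy, rfl⟩ := List.mem_map.1 hx
      obtain ⟨i, hi⟩ := ih y hy
      exact ⟨i + 1, by rw [pow_succ, Equiv.Perm.mul_apply]; simpa using hi⟩

/-- Corollary (sufficient condition, cardinality form): if `τυφ ∈ L(A)` via an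
accepting run `Cs` such that for every nonempty `Q ⊆ S`,
`card(Σ^Q(C_{|τυ|}) ∩ [φ]) ≤ card(Σ^Q(C_{|τ|}) ∩ [υφ])` and
`S^{Σ∖[φ]}(C_{|τυ|}) = S^{Σ∖[υφ]}(C_{|τ|})`, then there is a `Δ`-permutation
`α` with `τ υ α(υ) α²(υ) ⋯ α^k(υ) α^k(φ) ∈ L(A)` for every `k ≥ 1`. -/
theorem afma_pumping_of_cards {Sigma S : Type} [Infinite Sigma] [Fintype S]
    (A : AFMA Sigma S) (τ υ φ : List Sigma) (hυ : υ ≠ [])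
    (Cs : ℕ → Set (S × Sigma))
    (h0 : Cs 0 = {(A.s0, A.θ0)})
    (hstep : ∀ i (h : i < (τ ++ υ ++ φ).length),
      A.SetStep (Cs i) ((τ ++ υ ++ φ).get ⟨i, h⟩) (Cs (i + 1)))
    (hacc : A.Accepting (Cs (τ ++ υ ++ φ).length))
    (hcard : ∀ Q : Set S, Q.Nonempty →
      (AFMA.lettersWith (Cs (τ ++ υ).length) Q ∩ {x | x ∈ φ}).ncard ≤
        (AFMA.lettersWith (Cs τ.length) Q ∩ {x | x ∈ υ ++ φ}).ncard)
    (heq : AFMA.statesOn (Cs (τ ++ υ).length) {x | x ∈ φ}ᶜ =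
      AFMA.statesOn (Cs τ.length) {x | x ∈ υ ++ φ}ᶜ) :
    ∃ α : Equiv.Perm Sigma, IsDeltaPerm A.Δ α ∧
      ∀ k : ℕ, 1 ≤ k → pumpedWord α τ υ φ k ∈ A.Lang := by
  classical
  have hs1 : A.Steps (Cs 0) τ (Cs τ.length) := by
    apply A.steps_of_run τ Cs
    intro i hi
    have := hstep i (by simp; omega)
    simpa [List.getElem_append, hi, Nat.lt_add_right] using this
  have hs2 : A.Steps (Cs τ.length) υ (Cs (τ ++ υ).length) := by
    have := A.steps_of_run υ (fun i => Cs (τ.length + i)) (by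
      intro i hi
      have := hstep (τ.length + i) (by simp; omega)
      simpa [List.getElem_append, hi, ← add_assoc] using this)
    simpa using this
  have hs3 : A.Steps (Cs (τ ++ υ).length) φ (Cs (τ ++ υ ++ φ).length) := by
    have := A.steps_of_run φ (fun i => Cs ((τ ++ υ).length + i)) (by
      intro i hi
      have := hstep ((τ ++ υ).length + i) (by simp; omega)
      rw [List.get_eq_getElem, List.getElem_append_right (by simp)] at this
      simpa [← add_assoc] using this)
    rw [List.length_append (as := τ ++ υ)]
    exact this
  have hs12 : ∀ d ∈ Cs τ.length, (d.2 = A.θ0) ∨ (d.2 ∈ τ ∧ d.2 ∉ A.Δ) := by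
    intro d hd
    rcases A.letters_of_steps hs1 d hd with ⟨c, hc, h⟩ | h
    · rw [h0, Set.mem_singleton_iff] at hc
      subst hc
      exact Or.inl h.symm
    · exact Or.inr h
  set C := Cs τ.length with hC
  set D := Cs (τ ++ υ).length with hD
  let W : Finset Sigma := A.Δ ∪ {A.θ0} ∪ (τ ++ υ ++ φ).toFinset
  have hCl : ∀ s θ, (s, θ) ∈ C → θ ∈ W ∧ θ ∉ A.Δ := by
    intro s θ h
    rcases hs12 _ h with h | h
    · simp only at h
      subst h
      exact ⟨by simp [W], A.θ0_notin⟩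
    · exact ⟨by simp [W, h.1], h.2⟩
  have hDl : ∀ s θ, (s, θ) ∈ D → θ ∈ W ∧ θ ∉ A.Δ := by
    intro s θ h
    rcases A.letters_of_steps hs2 _ h with ⟨⟨s', θ'⟩, hc, h⟩ | h
    · simp only at h
      subst h
      exact hCl _ _ hc
    · exact ⟨by simp [W, h.1], h.2⟩
  obtain ⟨f, hf1, hf2⟩ := exists_fiber_injection (AFMA.statesAt D) (AFMA.statesAt C)
    {x | x ∈ φ} {x | x ∈ υ ++ φ} (List.finite_toSet φ) (List.finite_toSet (υ ++ φ)) hcard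
  let P : Set Sigma := {x | x ∈ φ ∧ (AFMA.statesAt D x).Nonempty}
  have hPΔ : ∀ x ∈ P, x ∉ A.Δ := fun x ⟨_, s, hs⟩ => (hDl s x hs).2
  have hfP : ∀ x ∈ P, f x ∈ W ∧ f x ∉ A.Δ := by
    rintro x ⟨hx, hne⟩
    obtain ⟨_, h2⟩ := hf1 x hx hne
    obtain ⟨s, hs⟩ := hne
    rw [← h2] at hs
    exact hCl s _ hs
  let f' : Sigma → Sigma := fun x => if x ∈ A.Δ then x else f x
  obtain ⟨β, hβ1, hβ2⟩ := exists_perm_extend_escape W (P ∪ A.Δ)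
    (by
      rintro x (hx | hx)
      · simp [W, hx.1]
      · have : x ∈ A.Δ := hx
        simp [W, this])
    f'
    (by
      rintro x (hx | hx)
      · simp only [f', hPΔ x hx, if_false]
        exact (hfP x hx).1
      · have hx : x ∈ A.Δ := hx
        simp [f', hx, W])
    (by
      rintro x (hx | hx) y (hy | hy) hxy
      · simp only [f', hPΔ x hx, hPΔ y hy, if_false] at hxy
        exact hf2 hx hy hxy
      · have hy : y ∈ A.Δ := hy
        simp only [f', hPΔ x hx, hy, if_false, if_true] at hxy
        exact absurd (hxy ▸ hy) (hfP x hx).2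
      · have hx : x ∈ A.Δ := hx
        simp only [f', hPΔ y hy, hx, if_false, if_true] at hxy
        exact absurd (hxy ▸ hx) (hfP y hy).2
      · have hx : x ∈ A.Δ := hx
        have hy : y ∈ A.Δ := hy
        simpa only [f', hx, hy, if_true] using hxy)
  have hα : IsDeltaPerm A.Δ β⁻¹ := by
    intro δ hδ
    rw [Equiv.Perm.inv_eq_iff_eq, hβ1 δ (Or.inr hδ)]
    simp [f', hδ]
  have hXW : ∀ x, x ∈ υ ++ φ → x ∈ W := by
    intro x hx
    simp only [List.mem_append] at hx
    simp only [W, Finset.mem_union, List.mem_toFinset, List.mem_append]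
    tauto
  have main : ∀ k, ∀ c ∈ C, A.AccW (pumpTail β⁻¹ υ φ k) c := by
    intro k
    induction k with
    | zero =>
      apply A.accW_append_of_steps hs2
      have := A.accW_append_of_steps hs3 [] hacc
      simpa using this
    | succ k ih =>
      apply A.accW_append_of_steps hs2
      rintro ⟨s, θ⟩ hd
      have hback : A.AccW (pumpTail β⁻¹ υ φ k) (s, β θ) := by
        by_cases hθ : θ ∈ φ
        · have hP : θ ∈ P := ⟨hθ, s, hd⟩
          rw [hβ1 θ (Or.inl hP)]
          simp only [f', hPΔ θ hP, if_false]
          apply ih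
          have := (hf1 θ hθ ⟨s, hd⟩).2
          have hs : s ∈ AFMA.statesAt D θ := hd
          rw [← this] at hs
          exact hs
        · have hs : s ∈ AFMA.statesOn D {x | x ∈ φ}ᶜ := by
            simp only [AFMA.statesOn, Set.mem_iUnion]
            exact ⟨θ, hθ, hd⟩
          rw [heq] at hs
          simp only [AFMA.statesOn, Set.mem_iUnion] at hs
          obtain ⟨η, hη, hsη⟩ := hs
          have hηX : η ∉ υ ++ φ := hη
          have hηφ : η ∉ φ := fun h => hηX (List.mem_append_right _ h)
          obtain ⟨hηW, hηΔ⟩ := hCl s η hsη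
          obtain ⟨hθW, hθΔ⟩ := hDl s θ hd
          refine A.accW_irrel _ s η (β θ) ?_ ?_ (ih _ hsη)
          · intro hmem
            obtain ⟨i, hi⟩ := mem_pumpTail _ _ _ _ _ hmem
            rw [inv_inv] at hi
            cases i with
            | zero => exact hηX hi
            | succ i =>
              refine hβ2 η hηW ?_ i (hXW _ hi)
              rintro (h | h)
              · exact hηφ h.1
              · exact hηΔ h
          · intro hmem
            obtain ⟨i, hi⟩ := mem_pumpTail _ _ _ _ _ hmem
            rw [inv_inv, ← Equiv.Perm.mul_apply, ← pow_succ] at hi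
            refine hβ2 θ hθW ?_ i (hXW _ hi)
            rintro (h | h)
            · exact hθ h.1
            · exact hθΔ h
      have := A.accW_map β⁻¹ hα _ s (β θ) hback
      simpa using this
  refine ⟨β⁻¹, hα, fun k _ => ?_⟩
  apply A.exists_steps_of_accW
  have h1 := A.accW_append_of_steps hs1 _ (main k)
  rw [h0, pumpTail_eq] at h1
  simpa only [pumpedWord, List.append_assoc] using h1
end
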